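/- arXiv:1805.12232 — 5 statements merged into one kernel-verified Lean document; each statement's English description precedes it below -/
import Mathlib

section
/- Suppose f is locally smooth relative to h on 𝒳, and let τ ∈ (0,1). Fix x ∈ 𝒳̃, and for each α > 0 let x(α) ∈ 𝒳̃ be the unique minimizer over 𝒳 of z ↦ α⟨∇f(x), z − x⟩ + D_h(z, x); assume α ↦ x(α) is continuous on [0, ∞) with x(0) = x. Then there exists α_x > 0 such that f(x(α)) ≤ f(x) + τ⟨∇f(x), x(α) − x⟩ for all α ∈ (0, α_x]. In particular, the Armijo line search procedure terminates after finitely many backtracking steps. -/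
open scoped RealInnerProductSpace

/-!
Let `g = ⟪∇f(x), x(α) - x⟫`. Comparing the minimizer `x(α)` with the feasible point `x` gives
`D_h(x(α), x) ≤ -α g`, and since `D_h ≥ 0` by convexity (`bregman_nonneg`), `g ≤ 0`. By continuity
of `x(·)` at `0`, for small `α` the point `x(α)` lies in the ball around `x` on which relative
smoothness holds with a constant `L`, so
`f(x(α)) ≤ f(x) + g + L D_h(x(α), x) ≤ f(x) + (1 - L α) g`. Because `g ≤ 0`, the right-hand side is
at most `f(x) + τ g` as soon as `α ≤ (1 - τ) / L`.
-/

/-- The Bregman divergence of a convex function is nonnegative (first-order characterization of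
convexity), obtained by restricting the function to the segment from `x` to `y`. -/
theorem bregman_nonneg {E : Type*} [NormedAddCommGroup E] [InnerProductSpace ℝ E]
    [CompleteSpace E] {X : Set E} {h : E → ℝ} {v x y : E} (hh : ConvexOn ℝ X h)
    (hv : HasGradientAt h v x) (hx : x ∈ X) (hy : y ∈ X) :
    0 ≤ h y - h x - ⟪v, y - x⟫ := by
  have hconv := hh.comp_affineMap (AffineMap.lineMap (k := ℝ) x y)
  have hline : HasDerivAt (fun t : ℝ => AffineMap.lineMap x y t) (y - x) (0 : ℝ) :=
    AffineMap.hasDerivAt_lineMap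
  have hv0 : HasFDerivAt h (InnerProductSpace.toDual ℝ E v)
      (AffineMap.lineMap x y (0 : ℝ)) := by
    simpa using hv.hasFDerivAt
  have hder := hv0.comp_hasDerivAt (0 : ℝ) hline
  have key := hconv.le_slope_of_hasDerivAt (x := 0) (y := 1) (by simpa using hx)
    (by simpa using hy) one_pos hder
  simp [slope_def_field] at key
  linarith

/-- Finite termination of Armijo line search.
Suppose `f` is locally smooth relative to `h` on `𝒳`, and let `τ ∈ (0,1)`.
Fix `x ∈ 𝒳̃`, and for each `α > 0` let `x(α) ∈ 𝒳̃` be the unique minimizer over `𝒳` of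
`z ↦ α⟨∇f(x), z − x⟩ + D_h(z, x)`; assume `α ↦ x(α)` is continuous on `[0, ∞)` with
`x(0) = x`.  Then there exists `α_x > 0` such that
`f(x(α)) ≤ f(x) + τ⟨∇f(x), x(α) − x⟩` for all `α ∈ (0, α_x]`.
(In particular, the Armijo line search terminates after finitely many backtracking steps.) -/
theorem stmt4 {d : ℕ} (X : Set (EuclideanSpace ℝ (Fin d)))
    (hXne : X.Nonempty) (hXcl : IsClosed X) (hXcv : Convex ℝ X)
    (f h : EuclideanSpace ℝ (Fin d) → ℝ)
    (f' h' : EuclideanSpace ℝ (Fin d) → EuclideanSpace ℝ (Fin d))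
    (hf : ConvexOn ℝ X f) (hh : ConvexOn ℝ X h) (hhs : StrictConvexOn ℝ X h)
    (hf' : ∀ y ∈ X, HasGradientAt f (f' y) y)
    (hh' : ∀ y ∈ X, HasGradientAt h (h' y) y)
    (D : EuclideanSpace ℝ (Fin d) → EuclideanSpace ℝ (Fin d) → ℝ)
    (hD : ∀ z₂ z₁, D z₂ z₁ = h z₂ - h z₁ - ⟪h' z₁, z₂ - z₁⟫)
    (hsmooth : ∀ y ∈ X, ∃ L > (0 : ℝ), ∃ ε > (0 : ℝ),
      ∀ z₁ ∈ Metric.ball y ε ∩ X, ∀ z₂ ∈ Metric.ball y ε ∩ X,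
        f z₂ ≤ f z₁ + ⟪f' z₁, z₂ - z₁⟫ + L * D z₂ z₁)
    (τ : ℝ) (hτ : τ ∈ Set.Ioo (0 : ℝ) 1)
    (x : EuclideanSpace ℝ (Fin d)) (hx : x ∈ X)
    (xmap : ℝ → EuclideanSpace ℝ (Fin d))
    (hmem : ∀ α : ℝ, 0 < α → xmap α ∈ X)
    (hmin : ∀ α : ℝ, 0 < α → ∀ z ∈ X,
      α * ⟪f' x, xmap α - x⟫ + D (xmap α) x ≤ α * ⟪f' x, z - x⟫ + D z x)
    (huniq : ∀ α : ℝ, 0 < α → ∀ z ∈ X,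
      α * ⟪f' x, z - x⟫ + D z x = α * ⟪f' x, xmap α - x⟫ + D (xmap α) x → z = xmap α)
    (hcont : ContinuousOn xmap (Set.Ici (0 : ℝ)))
    (hzero : xmap 0 = x) :
    ∃ αx > (0 : ℝ), ∀ α : ℝ, 0 < α → α ≤ αx →
      f (xmap α) ≤ f x + τ * ⟪f' x, xmap α - x⟫ := by
  obtain ⟨L, hL, ε, hε, hsm⟩ := hsmooth x hx
  have hev : ∃ δ > 0, ∀ α ∈ Set.Ici (0 : ℝ), dist α 0 < δ → dist (xmap α) (xmap 0) < ε :=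
    Metric.continuousOn_iff.1 hcont 0 (Set.mem_Ici.2 le_rfl) ε hε
  obtain ⟨δ, hδ, hball⟩ := hev
  have hτ' : 0 < 1 - τ := by linarith [hτ.2]
  -- `δ / 2` keeps `x(α)` in the smoothness ball; `(1 - τ) / L` ensures `τ ≤ 1 - L α`.
  refine ⟨min (δ / 2) ((1 - τ) / L), by positivity, fun α hα hle => ?_⟩
  have hαδ : α < δ := by linarith [hle.trans (min_le_left _ _)]
  have hαL : α * L ≤ 1 - τ := (le_div_iff₀ hL).1 (hle.trans (min_le_right _ _))
  have hin : dist (xmap α) x < ε := by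
    have := hball α hα.le (by rwa [Real.dist_eq, sub_zero, abs_of_pos hα])
    rwa [hzero] at this
  have hs := hsm x ⟨Metric.mem_ball_self hε, hx⟩ (xmap α) ⟨hin, hmem α hα⟩
  have hm : α * ⟪f' x, xmap α - x⟫ + D (xmap α) x ≤ 0 := by
    simpa [hD x x] using hmin α hα x hx
  have hnn : 0 ≤ D (xmap α) x := by
    rw [hD]
    exact bregman_nonneg hh (hh' x hx) hx (hmem α hα)
  have hg : ⟪f' x, xmap α - x⟫ ≤ 0 := by
    by_contra! hpos
    linarith [mul_pos hα hpos]
  have h1 := mul_le_mul_of_nonneg_left hm hL.le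
  have h2 := mul_nonneg (sub_nonneg.2 hαL) (neg_nonneg.2 hg)
  linarith
end

section
/- The function g(x, y) := −log x − log y is not smooth relative to the negative Shannon entropy on the probability simplex in ℝ²: for every L > 0 there exist points z₁ = (x₁, y₁) and z₂ = (x₂, y₂) in the relative interior of the simplex such that g(z₂) > g(z₁) + ⟨∇g(z₁), z₂ − z₁⟩ + L D_h(z₂, z₁), where h(x, y) := x log x + y log y and D_h(z₂, z₁) := h(z₂) − h(z₁) − ⟨∇h(z₁), z₂ − z₁⟩. -/
/-!
Take `z₁ = (1/2, 1/2)`. The coordinates of `∇g(z₁)` agree, and so do those of `∇h(z₁)`, so both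
inner products with `z₂ - z₁` vanish, and `D_h(z₂, z₁) = h(z₂) + log 2 ≤ log 2` because `h ≤ 0` on
the simplex. The right-hand side of the smoothness inequality is thus at most `(L + 2) log 2` for
every `z₂`, whereas `g(z₂) ≥ -log x₂` is unbounded; `x₂ = exp (-(L + 2))` already violates it since
`log 2 < 1`.
-/

/-- `g(x, y) = −log x − log y` is not smooth relative to the negative
Shannon entropy on the probability simplex in `ℝ²`:
for every `L > 0` there exist `z₁ = (x₁, y₁)` and `z₂ = (x₂, y₂)` in the relative
interior of the simplex such that
`g(z₂) > g(z₁) + ⟨∇g(z₁), z₂ − z₁⟩ + L D_h(z₂, z₁)`,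
where `h(x, y) = x log x + y log y` and `D_h` is its Bregman divergence
(`∇h(x, y) = (log x + 1, log y + 1)`, `∇g(x, y) = (−1/x, −1/y)`). -/
theorem stmt13 :
    ∀ L : ℝ, 0 < L → ∃ x₁ y₁ x₂ y₂ : ℝ,
      0 < x₁ ∧ 0 < y₁ ∧ x₁ + y₁ = 1 ∧
      0 < x₂ ∧ 0 < y₂ ∧ x₂ + y₂ = 1 ∧
      (-Real.log x₁ - Real.log y₁)
        + ((-(1 / x₁)) * (x₂ - x₁) + (-(1 / y₁)) * (y₂ - y₁))
        + L * ((x₂ * Real.log x₂ + y₂ * Real.log y₂)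
            - (x₁ * Real.log x₁ + y₁ * Real.log y₁)
            - ((Real.log x₁ + 1) * (x₂ - x₁) + (Real.log y₁ + 1) * (y₂ - y₁)))
      < (-Real.log x₂ - Real.log y₂) := by
  intro L hL
  have hx : 0 < Real.exp (-(L + 2)) := Real.exp_pos _
  have hx1 : Real.exp (-(L + 2)) < 1 := by rw [← Real.exp_zero]; exact Real.exp_lt_exp.2 (by linarith)
  have hlx : Real.log (Real.exp (-(L + 2))) = -(L + 2) := Real.log_exp _
  generalize Real.exp (-(L + 2)) = x at hx hx1 hlx
  refine ⟨1 / 2, 1 / 2, x, 1 - x, by norm_num, by norm_num, by norm_num, hx, by linarith,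
    by ring, ?_⟩
  have hly : Real.log (1 - x) ≤ 0 := Real.log_nonpos (by linarith) (by linarith)
  have hl2 : Real.log (1 / 2) = -Real.log 2 := by rw [one_div, Real.log_inv]
  have hlog : Real.log 2 < 1 := by linarith [Real.log_two_lt_d9]
  have hh : x * Real.log x + (1 - x) * Real.log (1 - x) ≤ 0 := by
    rw [hlx]
    nlinarith [mul_nonneg (sub_nonneg.2 hx1.le) (neg_nonneg.2 hly), mul_pos hx hL]
  rw [hl2]
  have hD := mul_le_mul_of_nonneg_left hh hL.le
  have hL2 : L * Real.log 2 < L * 1 := mul_lt_mul_of_pos_left hlog hL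
  linarith
end

section
/- Let U ⊆ ℝ^d be an open convex set, let g and h be convex functions twice differentiable on U, and let L > 0. Then g is L-smooth relative to h on U (i.e., g(z₂) ≤ g(z₁) + ⟨∇g(z₁), z₂ − z₁⟩ + L D_h(z₂, z₁) for all z₁, z₂ ∈ U) if and only if the function L h − g is convex on U. -/
/-!
Put `f = L h - g`, with gradient `f' = L h' - g'` on `U`. Relative smoothness of `g` is a
rearrangement of the gradient inequality `f z₁ + ⟪f' z₁, z₂ - z₁⟫ ≤ f z₂`, so the claim is the
first-order characterization of convexity. If `f` is convex, its restriction to the line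
through `z₁` and `z₂` is a convex function of one variable, whose derivative at `0` is at most
its slope over `[0, 1]`. Conversely, averaging the gradient inequalities based at
`z = a x + b y` with weights `a` and `b` cancels the linear terms and leaves
`f z ≤ a f x + b f y`.
-/

open scoped RealInnerProductSpace

/-- First-order characterization of convexity; `f'` need only be a gradient on `U`. -/
theorem convexOn_iff_gradient_ineq {E : Type*} [NormedAddCommGroup E] [InnerProductSpace ℝ E]
    [CompleteSpace E] {U : Set E} (hU : Convex ℝ U) {f : E → ℝ} {f' : E → E}
    (hf : ∀ y ∈ U, HasGradientAt f (f' y) y) :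
    ConvexOn ℝ U f ↔ ∀ x ∈ U, ∀ y ∈ U, f x + ⟪f' x, y - x⟫ ≤ f y := by
  constructor
  · intro hc x hx y hy
    have hline := hc.comp_affineMap (AffineMap.lineMap x y : ℝ →ᵃ[ℝ] E)
    have hd : HasDerivAt (f ∘ (AffineMap.lineMap x y : ℝ →ᵃ[ℝ] E)) ⟪f' x, y - x⟫ 0 := by
      have h1 : HasFDerivAt f (InnerProductSpace.toDual ℝ E (f' x))
          ((AffineMap.lineMap x y : ℝ →ᵃ[ℝ] E) 0) := by
        simpa using (hf x hx).hasFDerivAt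
      simpa using h1.comp_hasDerivAt (0 : ℝ) AffineMap.hasDerivAt_lineMap
    have hs := hline.le_slope_of_hasDerivAt (x := 0) (y := 1) (by simpa using hx)
      (by simpa using hy) one_pos hd
    simp [slope_def_field] at hs
    linarith
  · intro hgrad
    refine ⟨hU, fun x hx y hy a b ha hb hab => ?_⟩
    have hz := hU hx hy ha hb hab
    have h1 := mul_le_mul_of_nonneg_left (hgrad _ hz x hx) ha
    have h2 := mul_le_mul_of_nonneg_left (hgrad _ hz y hy) hb
    set z := a • x + b • y with hz_def
    have h0 : a * ⟪f' z, x - z⟫ + b * ⟪f' z, y - z⟫ = 0 := by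
      rw [← real_inner_smul_right, ← real_inner_smul_right, ← inner_add_right]
      have : a • (x - z) + b • (y - z) = 0 := by
        calc a • (x - z) + b • (y - z) = (a • x + b • y) - (a + b) • z := by module
          _ = 0 := by rw [hab, one_smul, ← hz_def, sub_self]
      rw [this, inner_zero_right]
    have h3 : f z = a * f z + b * f z := by rw [← add_mul, hab, one_mul]
    simp only [smul_eq_mul]
    linarith

/-- Characterization of relative smoothness, Lu–Freund–Nesterov.
Let `U ⊆ ℝ^d` be open convex, `g, h` convex and twice differentiable on `U`, `L > 0`.
Then `g` is `L`-smooth relative to `h` on `U`, i.e.,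
`g(z₂) ≤ g(z₁) + ⟨∇g(z₁), z₂ − z₁⟩ + L D_h(z₂, z₁)` for all `z₁, z₂ ∈ U`,
if and only if `L h − g` is convex on `U`. -/
theorem stmt14 {d : ℕ} (U : Set (EuclideanSpace ℝ (Fin d)))
    (hUopen : IsOpen U) (hUcv : Convex ℝ U)
    (g h : EuclideanSpace ℝ (Fin d) → ℝ)
    (g' h' : EuclideanSpace ℝ (Fin d) → EuclideanSpace ℝ (Fin d))
    (hg : ConvexOn ℝ U g) (hh : ConvexOn ℝ U h)
    (hgC2 : ContDiffOn ℝ 2 g U) (hhC2 : ContDiffOn ℝ 2 h U)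
    (hg' : ∀ y ∈ U, HasGradientAt g (g' y) y)
    (hh' : ∀ y ∈ U, HasGradientAt h (h' y) y)
    (L : ℝ) (hL : 0 < L) :
    (∀ z₁ ∈ U, ∀ z₂ ∈ U,
        g z₂ ≤ g z₁ + ⟪g' z₁, z₂ - z₁⟫ + L * (h z₂ - h z₁ - ⟪h' z₁, z₂ - z₁⟫)) ↔
      ConvexOn ℝ U (fun x => L * h x - g x) := by
  have hf : ∀ y ∈ U, HasGradientAt (fun x => L * h x - g x) (L • h' y - g' y) y := by
    intro y hy
    rw [hasGradientAt_iff_hasFDerivAt, map_sub, map_smulₛₗ]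
    exact ((hh' y hy).hasFDerivAt.const_mul L).sub (hg' y hy).hasFDerivAt
  rw [convexOn_iff_gradient_ineq hUcv hf]
  refine forall₄_congr fun x _ y _ => ?_
  rw [inner_sub_left, real_inner_smul_left]
  constructor <;> intro H <;> linarith
end

section
/- Let t, d ∈ ℕ and a₁, …, a_t ∈ [0, ∞)^d. The best-constant-rebalanced-portfolio objective f_BCRP(x) := −Σ_{i=1}^t log⟨a_i, x⟩ is locally smooth relative to the negative Shannon entropy h(x) := Σ_{j=1}^d x_j log x_j on the probability simplex 𝒫 ⊂ ℝ^d: for every x ∈ 𝒫 with ⟨a_i, x⟩ > 0 for all i, there exist L_x > 0 and ε_x > 0 such that f_BCRP(z₂) ≤ f_BCRP(z₁) + ⟨∇f_BCRP(z₁), z₂ − z₁⟩ + L_x D_h(z₂, z₁) for all z₁, z₂ ∈ B(x, ε_x) ∩ 𝒫 with strictly positive coordinates and ⟨a_i, z_l⟩ > 0 for all i, l. -/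
/-!
Each summand `-log⟨aᵢ, ·⟩` is handled separately. With `u = ⟨aᵢ, z₁⟩` and `v = ⟨aᵢ, z₂⟩`, the
Bregman remainder of `-log` is at most `(v - u)² / (u v)` (`neg_log_bregman_le`). Near `x` both `u`
and `v` exceed `⟨aᵢ, x⟩ / 2`, so Cauchy–Schwarz bounds the remainder by
`4 ‖aᵢ‖² ‖z₂ - z₁‖² / ⟨aᵢ, x⟩²`. On the other hand, all coordinates of simplex points lie in
`[0, 1]`, where the Bregman divergence of the entropy dominates a quarter of the squared Euclidean
distance, coordinate by coordinate (`sq_sub_le_entropy_bregman`). Hence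
`L = 1 + ∑ᵢ 16 ‖aᵢ‖² / ⟨aᵢ, x⟩²` works, the `1` ensuring positivity when the sum vanishes.
-/

open scoped RealInnerProductSpace

/-- Equivalent to `log s ≥ 1 - 1 / s` for `s = v / u`. -/
lemma neg_log_bregman_le {u v : ℝ} (hu : 0 < u) (hv : 0 < v) :
    -Real.log v + Real.log u + u⁻¹ * (v - u) ≤ (v - u) ^ 2 / (u * v) := by
  have h := Real.log_le_sub_one_of_pos (div_pos hu hv)
  rw [Real.log_div hu.ne' hv.ne'] at h
  have e : (v - u) ^ 2 / (u * v) = (u / v - 1) + u⁻¹ * (v - u) := by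
    field_simp
    ring
  rw [e]
  linarith

/-- The scalar entropy divergence is at least `(√q - √p)²`, the squared Hellinger term, and
`|q - p| = |√q - √p| (√q + √p) ≤ 2 |√q - √p|` on `(0, 1]`. -/
lemma sq_sub_le_entropy_bregman {p q : ℝ} (hp : 0 < p) (hq : 0 < q) (hp1 : p ≤ 1) (hq1 : q ≤ 1) :
    (q - p) ^ 2 ≤ 4 * (q * Real.log q - p * Real.log p - (Real.log p + 1) * (q - p)) := by
  obtain ⟨r, hr, rfl⟩ : ∃ r, 0 < r ∧ r ^ 2 = p := ⟨√p, Real.sqrt_pos.2 hp, Real.sq_sqrt hp.le⟩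
  obtain ⟨s, hs, rfl⟩ : ∃ s, 0 < s ∧ s ^ 2 = q := ⟨√q, Real.sqrt_pos.2 hq, Real.sq_sqrt hq.le⟩
  have hr1 : r ≤ 1 := by nlinarith
  have hs1 : s ≤ 1 := by nlinarith
  have h := Real.log_le_sub_one_of_pos (div_pos hr hs)
  rw [Real.log_div hr.ne' hs.ne'] at h
  have h2 : s ^ 2 * (Real.log r - Real.log s) ≤ s * r - s ^ 2 := by
    calc _ ≤ s ^ 2 * (r / s - 1) := by gcongr
      _ = _ := by field_simp
  have h3 : (s ^ 2 - r ^ 2) ^ 2 ≤ 4 * (s - r) ^ 2 := by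
    have h4 : (s + r) ^ 2 ≤ 4 := by nlinarith
    nlinarith [mul_le_mul_of_nonneg_right h4 (sq_nonneg (s - r))]
  rw [Real.log_pow, Real.log_pow]
  push_cast
  nlinarith

/-- A strong-convexity bound for the negative entropy on the interior of the simplex. -/
lemma norm_sq_sub_le_entropy_bregman {d : ℕ} {p q : EuclideanSpace ℝ (Fin d)}
    (hp : ∀ j, 0 < p j) (hp1 : ∑ j, p j = 1) (hq : ∀ j, 0 < q j) (hq1 : ∑ j, q j = 1) :
    ‖q - p‖ ^ 2 ≤ 4 * ((∑ j, q j * Real.log (q j)) - (∑ j, p j * Real.log (p j))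
      - ∑ j, (Real.log (p j) + 1) * (q j - p j)) := by
  have le_one : ∀ z : EuclideanSpace ℝ (Fin d), (∀ j, 0 < z j) → ∑ j, z j = 1 → ∀ j, z j ≤ 1 :=
    fun z hz hz1 j => hz1 ▸ Finset.single_le_sum (fun k _ => (hz k).le) (Finset.mem_univ j)
  rw [EuclideanSpace.real_norm_sq_eq, ← Finset.sum_sub_distrib, ← Finset.sum_sub_distrib,
    Finset.mul_sum]
  exact Finset.sum_le_sum fun j _ =>
    sq_sub_le_entropy_bregman (hp j) (hq j) (le_one p hp hp1 j) (le_one q hq hq1 j)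

/-- The BCRP objective is locally smooth relative to the negative
Shannon entropy on the probability simplex.
Let `a₁, …, a_t ∈ [0, ∞)^d`.  The objective `f_BCRP(x) := −Σᵢ log⟨aᵢ, x⟩`, with gradient
`∇f_BCRP(z) = −Σᵢ ⟨aᵢ, z⟩⁻¹ aᵢ`, is locally smooth relative to the negative Shannon
entropy `h(x) := Σⱼ xⱼ log xⱼ` (with `∇h(z) = (log zⱼ + 1)ⱼ`) on the probability simplex:
for every `x` in the simplex with `⟨aᵢ, x⟩ > 0` for all `i`, there are `L_x > 0`,
`ε_x > 0` such that the relative-smoothness inequality holds for all `z₁, z₂` in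
`B(x, ε_x)` that lie in the simplex, have strictly positive coordinates, and satisfy
`⟨aᵢ, z_l⟩ > 0` for all `i, l`. -/
theorem stmt15 (t d : ℕ) (a : Fin t → EuclideanSpace ℝ (Fin d))
    (ha : ∀ i, ∀ j, 0 ≤ a i j) :
    ∀ x : EuclideanSpace ℝ (Fin d),
      (∀ j, 0 ≤ x j) → (∑ j, x j) = 1 → (∀ i, 0 < ⟪a i, x⟫) →
      ∃ L > (0 : ℝ), ∃ ε > (0 : ℝ),
        ∀ z₁ z₂ : EuclideanSpace ℝ (Fin d),
          z₁ ∈ Metric.ball x ε → (∀ j, 0 < z₁ j) → (∑ j, z₁ j) = 1 →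
            (∀ i, 0 < ⟪a i, z₁⟫) →
          z₂ ∈ Metric.ball x ε → (∀ j, 0 < z₂ j) → (∑ j, z₂ j) = 1 →
            (∀ i, 0 < ⟪a i, z₂⟫) →
          (-∑ i, Real.log ⟪a i, z₂⟫)
            ≤ (-∑ i, Real.log ⟪a i, z₁⟫)
              + ⟪-∑ i, (⟪a i, z₁⟫)⁻¹ • a i, z₂ - z₁⟫
              + L * ((∑ j, z₂ j * Real.log (z₂ j))
                  - (∑ j, z₁ j * Real.log (z₁ j))
                  - ∑ j, (Real.log (z₁ j) + 1) * (z₂ j - z₁ j)) := by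
  intro x _ _ hax
  have hnear : ∀ᶠ z in nhds x, ∀ i, ⟪a i, x⟫ / 2 < ⟪a i, z⟫ := by
    refine Filter.eventually_all.2 fun i => ?_
    have hc : Continuous fun z => ⟪a i, z⟫ := by fun_prop
    exact hc.continuousAt.eventually (lt_mem_nhds (half_lt_self (hax i)))
  obtain ⟨ε, hε, hball⟩ := Metric.eventually_nhds_iff_ball.1 hnear
  have hK : ∀ i, 0 ≤ 16 * ‖a i‖ ^ 2 / ⟪a i, x⟫ ^ 2 := fun i => by positivity
  refine ⟨1 + ∑ i, 16 * ‖a i‖ ^ 2 / ⟪a i, x⟫ ^ 2,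
    add_pos_of_pos_of_nonneg one_pos (Finset.sum_nonneg fun i _ => hK i), ε, hε, ?_⟩
  intro z₁ z₂ hz₁ hp hp1 hu hz₂ hq hq1 hv
  have hD := norm_sq_sub_le_entropy_bregman hp hp1 hq hq1
  set D := (∑ j, z₂ j * Real.log (z₂ j)) - (∑ j, z₁ j * Real.log (z₁ j))
    - ∑ j, (Real.log (z₁ j) + 1) * (z₂ j - z₁ j)
  have hD0 : 0 ≤ D := by nlinarith [sq_nonneg ‖z₂ - z₁‖]
  have hterm : ∀ i, -Real.log ⟪a i, z₂⟫ + Real.log ⟪a i, z₁⟫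
      + (⟪a i, z₁⟫)⁻¹ * ⟪a i, z₂ - z₁⟫ ≤ 16 * ‖a i‖ ^ 2 / ⟪a i, x⟫ ^ 2 * D := by
    intro i
    have hc := hax i
    have hCS : ⟪a i, z₂ - z₁⟫ ^ 2 ≤ ‖a i‖ ^ 2 * ‖z₂ - z₁‖ ^ 2 := by
      rw [← mul_pow]
      exact sq_le_sq.2 ((abs_real_inner_le_norm _ _).trans (le_abs_self _))
    have hden : ⟪a i, x⟫ / 2 * (⟪a i, x⟫ / 2) ≤ ⟪a i, z₁⟫ * ⟪a i, z₂⟫ :=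
      mul_le_mul (hball z₁ hz₁ i).le (hball z₂ hz₂ i).le (by positivity) (hu i).le
    have h := neg_log_bregman_le (hu i) (hv i)
    rw [← inner_sub_right] at h
    calc _ ≤ _ := h
      _ ≤ ‖a i‖ ^ 2 * (4 * D) / (⟪a i, x⟫ / 2 * (⟪a i, x⟫ / 2)) := by
        gcongr
        exact hCS.trans (by gcongr)
      _ = _ := by
        field_simp
        ring
  have hsum := Finset.sum_le_sum fun i (_ : i ∈ Finset.univ) => hterm i
  rw [Finset.sum_add_distrib, Finset.sum_add_distrib, Finset.sum_neg_distrib,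
    ← Finset.sum_mul] at hsum
  rw [inner_neg_left, sum_inner]
  simp only [real_inner_smul_left]
  linarith
end

section
/- Let M₁, …, M_n be positive semi-definite d × d complex matrices. The quantum state tomography objective f_QST(x) := −Σ_{i=1}^n log tr(M_i x) is locally smooth relative to the negative von Neumann entropy h(x) := Re tr(x · log x) on the set 𝒟 of density matrices: for every x ∈ 𝒟 with tr(M_i x) > 0 for all i, there exist L_x > 0 and ε_x > 0 such that f_QST(z₂) ≤ f_QST(z₁) + ⟨∇f_QST(z₁), z₂ − z₁⟩ + L_x D_h(z₂, z₁) for all positive-definite z₁, z₂ ∈ B(x, ε_x) ∩ 𝒟 with tr(M_i z_l) > 0 for all i, l, where D_h(z₂, z₁) := Re tr(z₂ (log z₂ − log z₁)) is the quantum relative entropy and log denotes the matrix logarithm (continuous functional calculus of the real logarithm on positive-definite matrices). -/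
/-!
Relative entropy controls the squared Frobenius distance: for positive definite matrices `z₁`, `z₂`
of trace one, `‖z₂ - z₁‖² / 4 ≤ D_h(z₂, z₁)` (`pinsker`). With `p`, `q` the eigenvalues of `z₂`,
`z₁` and `w i j = |⟨uᵢ, vⱼ⟩|²` the weights between their eigenbases, both sides are sums against `w`:
`D_h = ∑ w i j (pᵢ log pᵢ - pᵢ log qⱼ - pᵢ + qⱼ)` and `‖z₂ - z₁‖² = ∑ w i j (pᵢ - qⱼ)²`
(`trace_cfc_mul_cfc`). All eigenvalues lie in `(0, 1]`, so the scalar bound `sq_le_klein` applies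
to each term.

For the objective, put `a = tr (Mᵢ z₁)` and `b = tr (Mᵢ z₂)`. By `log_descent`, the error in the
linearization of `-log` at `a` is at most `(b - a)² / (ab)`. On a small ball around `x` both `a` and
`b` are at least half of `tr (Mᵢ x) > 0`, while `|b - a|` is bounded by a multiple of `‖z₂ - z₁‖`.
Hence the error is a bounded multiple of `‖z₂ - z₁‖²`, and so of `D_h`.
-/

open Matrix
open scoped ComplexOrder

attribute [local instance] Matrix.frobeniusSeminormedAddCommGroup
attribute [local instance] Matrix.frobeniusNormedAddCommGroup

/-- The scalar case of the entropy bound. From `log t ≤ t - 1` at `t = √(q / p)` the right-hand side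
is at least `(√p - √q)²`, and `√p + √q ≤ 2` on `(0, 1]`. -/
theorem sq_le_klein {p q : ℝ} (hp : 0 < p) (hq : 0 < q) (hp1 : p ≤ 1) (hq1 : q ≤ 1) :
    (p - q) ^ 2 / 4 ≤ p * Real.log p - p * Real.log q - p + q := by
  obtain ⟨s, hs, rfl⟩ : ∃ s : ℝ, 0 < s ∧ s ^ 2 = p := ⟨√p, Real.sqrt_pos.2 hp, Real.sq_sqrt hp.le⟩
  obtain ⟨t, ht, rfl⟩ : ∃ t : ℝ, 0 < t ∧ t ^ 2 = q := ⟨√q, Real.sqrt_pos.2 hq, Real.sq_sqrt hq.le⟩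
  have hs1 : s ≤ 1 := by nlinarith
  have ht1 : t ≤ 1 := by nlinarith
  have h := Real.log_le_sub_one_of_pos (div_pos ht hs)
  rw [Real.log_div ht.ne' hs.ne'] at h
  have h2 := mul_le_mul_of_nonneg_left h (by positivity : 0 ≤ 2 * s ^ 2)
  have h3 : 2 * s ^ 2 * (t / s - 1) = 2 * s * t - 2 * s ^ 2 := by field_simp
  rw [Real.log_pow, Real.log_pow]
  have h4 : (s ^ 2 - t ^ 2) ^ 2 / 4 ≤ (s - t) ^ 2 := by
    have : (s + t) ^ 2 ≤ 4 := by nlinarith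
    nlinarith [mul_le_mul_of_nonneg_left this (sq_nonneg (s - t))]
  push_cast
  nlinarith

/-- Second-order upper bound for `-log`, from `log t ≤ t - 1` at `t = a / b`. -/
theorem log_descent {a b : ℝ} (ha : 0 < a) (hb : 0 < b) :
    -Real.log b ≤ -Real.log a - a⁻¹ * (b - a) + (b - a) ^ 2 / (a * b) := by
  have h := Real.log_le_sub_one_of_pos (div_pos ha hb)
  rw [Real.log_div ha.ne' hb.ne'] at h
  have : a / b - 1 = - (a⁻¹ * (b - a)) + (b - a) ^ 2 / (a * b) := by field_simp; ring
  linarith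

theorem cfc_mul_cfc {d : ℕ} {A : Matrix (Fin d) (Fin d) ℂ} (hA : A.IsHermitian) (f g : ℝ → ℝ) :
    hA.cfc f * hA.cfc g = hA.cfc (fun x => f x * g x) := by
  rw [← hA.cfc_eq, ← hA.cfc_eq, ← hA.cfc_eq,
    cfc_mul f g A (finite_real_spectrum.continuousOn f) (finite_real_spectrum.continuousOn g)]

theorem cfc_one' {d : ℕ} {A : Matrix (Fin d) (Fin d) ℂ} (hA : A.IsHermitian) :
    hA.cfc (fun _ => 1) = 1 := by
  rw [← hA.cfc_eq]; exact cfc_const_one ℝ A hA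

theorem cfc_id'' {d : ℕ} {A : Matrix (Fin d) (Fin d) ℂ} (hA : A.IsHermitian) :
    hA.cfc (fun x => x) = A := by
  rw [← hA.cfc_eq]; exact cfc_id' ℝ A hA

/-- The transition weight `|⟨uᵢ, vⱼ⟩|²` between the `i`-th eigenvector `uᵢ` of `A` and the `j`-th
eigenvector `vⱼ` of `B`, for the orthonormal eigenbases fixed by `eigenvectorUnitary`. -/
noncomputable def overlap {d : ℕ} {A B : Matrix (Fin d) (Fin d) ℂ}
    (hA : A.IsHermitian) (hB : B.IsHermitian)
    (i j : Fin d) : ℝ :=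
  Complex.normSq ((star (hA.eigenvectorUnitary : Matrix (Fin d) (Fin d) ℂ) *
    (hB.eigenvectorUnitary : Matrix (Fin d) (Fin d) ℂ)) i j)

theorem trace_conj_mul_conj {d : ℕ} (U V : Matrix (Fin d) (Fin d) ℂ) (p q : Fin d → ℝ) :
    trace (U * diagonal (fun i => (p i : ℂ)) * star U *
        (V * diagonal (fun i => (q i : ℂ)) * star V)) =
      ∑ i, ∑ j, ((Complex.normSq ((star U * V) i j) * (p i * q j) : ℝ) : ℂ) := by
  obtain ⟨W, hW⟩ : ∃ W, W = star U * V := ⟨_, rfl⟩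
  have hW' : star V * U = star W := by simp [hW]
  rw [← hW, show ∀ D E : Matrix (Fin d) (Fin d) ℂ, U * D * star U * (V * E * star V)
    = U * (D * W * E * star V) by intros; simp only [hW, mul_assoc], trace_mul_comm, mul_assoc,
    hW']
  simp only [trace, diag, mul_apply (N := star W), mul_diagonal, diagonal_mul, star_apply]
  refine Finset.sum_congr rfl fun i _ => Finset.sum_congr rfl fun j _ => ?_
  push_cast
  rw [Complex.normSq_eq_conj_mul_self]
  simp only [RCLike.star_def]
  ring

/-- Functions of `A` and of `B` pair under the trace through the transition weights. Every trace in
the proof is an instance of this formula, so inequalities between traces reduce to scalar ones. -/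
theorem trace_cfc_mul_cfc {d : ℕ} {A B : Matrix (Fin d) (Fin d) ℂ} (hA : A.IsHermitian)
    (hB : B.IsHermitian) (f g : ℝ → ℝ) :
    (trace (hA.cfc f * hB.cfc g)).re =
      ∑ i, ∑ j, overlap hA hB i j * (f (hA.eigenvalues i) * g (hB.eigenvalues j)) := by
  have h : trace (hA.cfc f * hB.cfc g) = ∑ i, ∑ j,
      ((overlap hA hB i j * (f (hA.eigenvalues i) * g (hB.eigenvalues j)) : ℝ) : ℂ) := by
    simp only [Matrix.IsHermitian.cfc, Unitary.conjStarAlgAut_apply, overlap]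
    exact trace_conj_mul_conj _ _ (f ∘ hA.eigenvalues) (g ∘ hB.eigenvalues)
  rw [h]
  simp only [← Complex.ofReal_sum, Complex.ofReal_re]

theorem frobenius_sq {d : ℕ} {A : Matrix (Fin d) (Fin d) ℂ} (hA : A.IsHermitian) :
    ‖A‖ ^ 2 = (trace (A * A)).re := by
  conv_rhs => enter [1,1,1]; rw [← hA.eq]
  rw [frobenius_norm_def, ← Real.sqrt_eq_rpow, Real.sq_sqrt (by positivity)]
  simp only [trace, diag, mul_apply, conjTranspose_apply, Complex.re_sum]
  rw [Finset.sum_comm]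
  refine Finset.sum_congr rfl fun i _ => Finset.sum_congr rfl fun j _ => ?_
  rw [Complex.star_def, ← Complex.normSq_eq_conj_mul_self, Complex.ofReal_re,
    Complex.normSq_eq_norm_sq]
  norm_cast

theorem eigenvalue_le_one {d : ℕ} {A : Matrix (Fin d) (Fin d) ℂ} (hA : A.PosDef) (h1 : A.trace = 1)
    (i : Fin d) : hA.isHermitian.eigenvalues i ≤ 1 := by
  have h := hA.isHermitian.trace_eq_sum_eigenvalues
  rw [h1] at h
  have h' : ∑ i, hA.isHermitian.eigenvalues i = 1 := by
    simpa using (congrArg Complex.re h).symm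
  rw [← h']
  exact Finset.single_le_sum (fun j _ => (hA.eigenvalues_pos j).le) (Finset.mem_univ i)

/-- A Pinsker-type inequality: quantum relative entropy dominates the squared Frobenius distance of
density matrices. After expansion in the two eigenbases it is `sq_le_klein` summed against the
nonnegative transition weights. -/
theorem pinsker {d : ℕ} {A B : Matrix (Fin d) (Fin d) ℂ} (hA : A.PosDef) (hB : B.PosDef)
    (hA1 : A.trace = 1) (hB1 : B.trace = 1) :
    ‖B - A‖ ^ 2 / 4 ≤
      (trace (B * (hB.isHermitian.cfc Real.log - hA.isHermitian.cfc Real.log))).re := by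
  have a := hA.isHermitian
  have b := hB.isHermitian
  have key (f g : ℝ → ℝ) := trace_cfc_mul_cfc b a f g
  -- Expansions, in this order, of: tr B², tr A², tr BA, tr (B log B), tr (B log A), tr B, tr A.
  have e1 := key (fun x => x * x) (fun _ => 1)
  have e2 := key (fun _ => 1) (fun x => x * x)
  have e3 := key (fun x => x) (fun x => x)
  have e4 := key (fun x => x * Real.log x) (fun _ => 1)
  have e5 := key (fun x => x) Real.log
  have e6 := key (fun x => x) (fun _ => 1)
  have e7 := key (fun _ => 1) (fun x => x)
  rw [← cfc_mul_cfc, cfc_one', cfc_id'', mul_one] at e1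
  rw [← cfc_mul_cfc, cfc_one', cfc_id'', one_mul] at e2
  rw [cfc_id'', cfc_id''] at e3
  rw [← cfc_mul_cfc, cfc_one', cfc_id'', mul_one] at e4
  rw [cfc_id''] at e5
  rw [cfc_id'', cfc_one', mul_one, hB1] at e6
  rw [cfc_id'', cfc_one', one_mul, hA1] at e7
  have hle : ∑ i, ∑ j, overlap b a i j * ((b.eigenvalues i - a.eigenvalues j) ^ 2 / 4) ≤
      ∑ i, ∑ j, overlap b a i j * (b.eigenvalues i * Real.log (b.eigenvalues i)
        - b.eigenvalues i * Real.log (a.eigenvalues j) - b.eigenvalues i + a.eigenvalues j) := by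
    refine Finset.sum_le_sum fun i _ => Finset.sum_le_sum fun j _ => ?_
    exact mul_le_mul_of_nonneg_left (sq_le_klein (hB.eigenvalues_pos i) (hA.eigenvalues_pos j)
      (eigenvalue_le_one hB hB1 i) (eigenvalue_le_one hA hA1 j)) (Complex.normSq_nonneg _)
  have hR : (trace (B * (hB.isHermitian.cfc Real.log - hA.isHermitian.cfc Real.log))).re =
      ∑ i, ∑ j, overlap b a i j * (b.eigenvalues i * Real.log (b.eigenvalues i)
        - b.eigenvalues i * Real.log (a.eigenvalues j) - b.eigenvalues i + a.eigenvalues j) := by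
    rw [mul_sub, trace_sub, Complex.sub_re, e4, e5]
    -- The traces agree, so the terms `-p + q` contribute nothing.
    have e8 := e6.symm.trans e7
    simp only [mul_add, mul_sub, Finset.sum_add_distrib, Finset.sum_sub_distrib, one_mul,
      mul_one] at e8 ⊢
    linarith
  have hL : ‖B - A‖ ^ 2 / 4 =
      ∑ i, ∑ j, overlap b a i j * ((b.eigenvalues i - a.eigenvalues j) ^ 2 / 4) := by
    rw [frobenius_sq (b.sub a), mul_sub, sub_mul, sub_mul, trace_sub, trace_sub, trace_sub,
      trace_mul_comm A B, Complex.sub_re, Complex.sub_re, Complex.sub_re, e1, e2, e3]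
    simp only [← Finset.sum_sub_distrib, Finset.sum_div]
    refine Finset.sum_congr rfl fun i _ => Finset.sum_congr rfl fun j _ => ?_
    ring
  rw [hR, hL]
  exact hle

theorem norm_entry_le {d : ℕ} (D : Matrix (Fin d) (Fin d) ℂ) (i j : Fin d) : ‖D i j‖ ≤ ‖D‖ := by
  rw [frobenius_norm_def, ← Real.sqrt_eq_rpow]
  refine Real.le_sqrt_of_sq_le ?_
  rw [← Real.rpow_natCast]
  refine le_trans ?_ (Finset.single_le_sum (f := fun i => ∑ j, ‖D i j‖ ^ (2 : ℝ))
    (fun i _ => by positivity) (Finset.mem_univ i))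
  exact_mod_cast Finset.single_le_sum (f := fun j => ‖D i j‖ ^ (2 : ℝ))
    (fun j _ => by positivity) (Finset.mem_univ j)

theorem trace_bound {d : ℕ} (M : Matrix (Fin d) (Fin d) ℂ) :
    ∃ C : ℝ, 0 ≤ C ∧ ∀ D : Matrix (Fin d) (Fin d) ℂ, |(trace (M * D)).re| ≤ C * ‖D‖ := by
  refine ⟨∑ i, ∑ j, ‖M i j‖, by positivity, fun D => (Complex.abs_re_le_norm _).trans ?_⟩
  simp only [trace, diag, mul_apply, Finset.sum_mul]
  refine (norm_sum_le _ _).trans (Finset.sum_le_sum fun i _ =>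
    (norm_sum_le _ _).trans (Finset.sum_le_sum fun j _ => ?_))
  rw [norm_mul]
  exact mul_le_mul_of_nonneg_left (norm_entry_le D j i) (norm_nonneg _)

/-- The QST objective is locally smooth relative to the negative von
Neumann entropy on the set of density matrices.
Let `M₁, …, M_n` be PSD `d × d` complex matrices and
`f_QST(x) := −Σᵢ log tr(Mᵢ x)`, with gradient `∇f_QST(z) = −Σᵢ Mᵢ / tr(Mᵢ z)` and real
inner product `⟨A, B⟩ = Re tr(Aᴴ B)` (Frobenius norm balls).  For every density matrix
`x` with `tr(Mᵢ x) > 0` for all `i`, there are `L_x > 0`, `ε_x > 0` such that for all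
positive-definite density matrices `z₁, z₂ ∈ B(x, ε_x)` with `tr(Mᵢ z_l) > 0`,
`f_QST(z₂) ≤ f_QST(z₁) + ⟨∇f_QST(z₁), z₂ − z₁⟩ + L_x · Re tr(z₂(log z₂ − log z₁))`,
where `log` is the continuous functional calculus of the real logarithm. -/
theorem stmt16 (d n : ℕ) (M : Fin n → Matrix (Fin d) (Fin d) ℂ)
    (hM : ∀ i, (M i).PosSemidef) :
    ∀ x : Matrix (Fin d) (Fin d) ℂ, x.PosSemidef → x.trace = 1 →
      (∀ i, 0 < (Matrix.trace (M i * x)).re) →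
      ∃ L > (0 : ℝ), ∃ ε > (0 : ℝ),
        ∀ z₁ z₂ : Matrix (Fin d) (Fin d) ℂ,
          ∀ (h₁ : z₁.PosDef) (h₂ : z₂.PosDef),
          z₁.trace = 1 → ‖z₁ - x‖ < ε →
            (∀ i, 0 < (Matrix.trace (M i * z₁)).re) →
          z₂.trace = 1 → ‖z₂ - x‖ < ε →
            (∀ i, 0 < (Matrix.trace (M i * z₂)).re) →
          (-∑ i, Real.log (Matrix.trace (M i * z₂)).re)
            ≤ (-∑ i, Real.log (Matrix.trace (M i * z₁)).re)
              + (Matrix.trace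
                  ((-∑ i, ((Matrix.trace (M i * z₁)).re)⁻¹ • M i)ᴴ * (z₂ - z₁))).re
              + L * (Matrix.trace
                  (z₂ * (h₂.isHermitian.cfc Real.log - h₁.isHermitian.cfc Real.log))).re := by
  intro x _ _ hx
  choose C hC0 hC using fun i => trace_bound (M i)
  set c : Fin n → ℝ := fun i => (trace (M i * x)).re with hc
  have hS : 0 ≤ ∑ i, 2 * C i / c i :=
    Finset.sum_nonneg fun i _ => div_nonneg (mul_nonneg zero_le_two (hC0 i)) (hx i).le
  have hT : 0 ≤ ∑ i, 16 * C i ^ 2 / c i ^ 2 := Finset.sum_nonneg fun i _ => by positivity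
  -- `ε` makes `tr (Mᵢ z) ≥ cᵢ / 2` on the ball. Then the second-order term of `log_descent` is at most
  -- `4 Cᵢ² / cᵢ² * ‖z₂ - z₁‖²`, and the factor `1 / 4` of `pinsker` turns `4` into `16`.
  refine ⟨∑ i, 16 * C i ^ 2 / c i ^ 2 + 1, by positivity, (1 + ∑ i, 2 * C i / c i)⁻¹,
    by positivity, ?_⟩
  intro z₁ z₂ h₁ h₂ t₁ n₁ p₁ t₂ n₂ p₂
  have low (z : Matrix (Fin d) (Fin d) ℂ) (hz : ‖z - x‖ < (1 + ∑ i, 2 * C i / c i)⁻¹)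
      (i : Fin n) : c i / 2 ≤ (trace (M i * z)).re := by
    have hci : 0 < c i := hx i
    have h1 := (hC i (z - x)).trans (mul_le_mul_of_nonneg_left hz.le (hC0 i))
    have h2 : C i * (1 + ∑ i, 2 * C i / c i)⁻¹ ≤ c i / 2 := by
      rw [← div_eq_mul_inv, div_le_iff₀ (by positivity)]
      have h3 : 2 * C i / c i ≤ ∑ i, 2 * C i / c i :=
        Finset.single_le_sum (f := fun i => 2 * C i / c i)
          (fun j _ => div_nonneg (mul_nonneg zero_le_two (hC0 j)) (hx j).le) (Finset.mem_univ i)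
      rw [div_le_iff₀ hci] at h3
      nlinarith
    have h4 := neg_abs_le (trace (M i * (z - x))).re
    rw [mul_sub, trace_sub, Complex.sub_re] at h4 h1
    change _ ≤ _ - c i at h4
    change |_ - c i| ≤ _ at h1
    linarith
  have hgrad : (trace ((-∑ i, ((trace (M i * z₁)).re)⁻¹ • M i)ᴴ * (z₂ - z₁))).re =
      -∑ i, ((trace (M i * z₁)).re)⁻¹ * ((trace (M i * z₂)).re - (trace (M i * z₁)).re) := by
    have : (-∑ i, ((trace (M i * z₁)).re)⁻¹ • M i)ᴴ = -∑ i, ((trace (M i * z₁)).re)⁻¹ • M i := by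
      simp [conjTranspose_sum, conjTranspose_smul, fun i => (hM i).isHermitian.eq]
    rw [this]
    simp [Finset.sum_mul, trace_sum, mul_sub]
    ring
  have hD := pinsker h₁ h₂ t₁ t₂
  have hterm (i : Fin n) : -Real.log (trace (M i * z₂)).re ≤ -Real.log (trace (M i * z₁)).re
      - ((trace (M i * z₁)).re)⁻¹ * ((trace (M i * z₂)).re - (trace (M i * z₁)).re)
      + 16 * C i ^ 2 / c i ^ 2 * (‖z₂ - z₁‖ ^ 2 / 4) := by
    have hci : 0 < c i := hx i
    refine (log_descent (p₁ i) (p₂ i)).trans (add_le_add_right ?_ _)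
    have hab := mul_le_mul (low z₁ n₁ i) (low z₂ n₂ i) (by positivity) (p₁ i).le
    have hsq := pow_le_pow_left₀ (abs_nonneg _) (hC i (z₂ - z₁)) 2
    rw [sq_abs, mul_sub, trace_sub, Complex.sub_re] at hsq
    refine (div_le_div₀ (by positivity) hsq (by positivity) hab).trans (le_of_eq ?_)
    field_simp
    ring
  have hsum := Finset.sum_le_sum fun i (_ : i ∈ Finset.univ) => hterm i
  rw [Finset.sum_add_distrib, Finset.sum_sub_distrib, ← Finset.sum_mul] at hsum
  simp only [Finset.sum_neg_distrib] at hsum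
  rw [hgrad]
  have hLD := mul_le_mul_of_nonneg_left hD (add_nonneg hT zero_le_one)
  nlinarith [sq_nonneg ‖z₂ - z₁‖]
end
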